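/- For all n ≥ 0, B^{(2)}_{n,α}(x;q) = q^{n(n-1)/2} B^{(1)}_{n,α}(x;1/q), and in particular β_{n,α}(q) = q^{n(n-1)/2} β_{n,α}(1/q). -/

import Mathlib

/-- The q-shifted factorial `(a;q)_n`. -/
noncomputable def qPoch (a q : ℂ) (n : ℕ) : ℂ := ∏ k ∈ Finset.range n, (1 - a * q ^ k)

/-- The q-factorial `[n]_q!`. -/
noncomputable def qFact (q : ℂ) (n : ℕ) : ℂ := qPoch q q n / (1 - q) ^ n

/-- The Gaussian binomial coefficient. -/
noncomputable def qBinom (q : ℂ) (n k : ℕ) : ℂ :=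
  qPoch q q n / (qPoch q q k * qPoch q q (n - k))

/-- `β : ℕ → ℂ` is the sequence of generalized q-Bernoulli numbers `β_{n,α}(q)`:
`β_0 = 1` and for `n ≥ 1`,
`∑_{k=0}^{⌊n/2⌋} (1-q)^{2k} β_{n-2k} / (2^{2k} [n-2k]_q! (q²;q²)_k (q^{2α+2};q²)_k)
  = (-1/2)^n / [n]_q!`. -/
def qBetaSpec (q α : ℝ) (β : ℕ → ℂ) : Prop :=
  β 0 = 1 ∧ ∀ n : ℕ, 1 ≤ n →
    ∑ k ∈ Finset.range (n / 2 + 1),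
      ((1 : ℂ) - q) ^ (2 * k) * β (n - 2 * k) /
        (2 ^ (2 * k) * qFact (q : ℂ) (n - 2 * k) *
          qPoch ((q : ℂ) ^ 2) ((q : ℂ) ^ 2) k *
          qPoch (((q ^ (2 * α + 2) : ℝ) : ℂ)) ((q : ℂ) ^ 2) k)
      = (-1 / 2) ^ n / qFact (q : ℂ) n

/-- `B^{(1)}_{n,α}(x;q) = ∑_{k=0}^n [n,k]_q c_{n-k} x^k`. -/
noncomputable def B1poly (q : ℂ) (c : ℕ → ℂ) (n : ℕ) (x : ℂ) : ℂ :=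
  ∑ k ∈ Finset.range (n + 1), qBinom q n k * c (n - k) * x ^ k

/-- `B^{(2)}_{n,α}(x;q) = ∑_{k=0}^n [n,k]_q q^{k(k-1)/2} c_{n-k} x^k`. -/
noncomputable def B2poly (q : ℂ) (c : ℕ → ℂ) (n : ℕ) (x : ℂ) : ℂ :=
  ∑ k ∈ Finset.range (n + 1), qBinom q n k * q ^ (k * (k - 1) / 2) * c (n - k) * x ^ k

/-!
Multiplying out, the recursion says that `A(x) = ∑ β_n (2x)^n / (q;q)_n` satisfies
`F(x²) A(x) = e_q(-x)`, where `F` is the series of Jackson's first q-Bessel function with base `q²`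
and `e_q(-x) = 1 / (-x;q)_∞`. Multiplication by `(x²;q²)_∞` turns `F(x²)` into the series `G(x²)` of
Jackson's second q-Bessel function and `e_q(-x)` into `(x;q)_∞`, so `G(x²) A(x) = (x;q)_∞`.
Replacing `q` by `1/q` and `x` by `-qx` exchanges `F` with `G` and `1 / (-x;q)_∞` with `(x;q)_∞`,
so `∑ q^{n(n-1)/2} β_n(1/q) (2x)^n / (q;q)_n` solves the same equation and hence equals `A(x)`.
-/

open PowerSeries

section PowerSeriesExpand

variable {R : Type*} [CommRing R] (p : ℕ) (hp : p ≠ 0)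

lemma rescale_expand (a : R) (f : R⟦X⟧) :
    rescale a (expand p hp f) = expand p hp (rescale (a ^ p) f) := by
  ext n
  by_cases hpn : p ∣ n
  · obtain ⟨m, rfl⟩ := hpn
    simp only [coeff_rescale, coeff_expand_mul, pow_mul]
  · simp only [coeff_rescale, coeff_expand_of_not_dvd p hp _ hpn, mul_zero]

lemma coeff_expand_mul_eq_sum (f g : R⟦X⟧) (n : ℕ) :
    coeff n (expand p hp f * g) =
      ∑ k ∈ Finset.range (n / p + 1), coeff k f * coeff (n - p * k) g := by
  have mem_iff (k : ℕ) : p * k ∈ Finset.range n.succ ↔ k ∈ Finset.range (n / p + 1) := by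
    rw [Finset.mem_range_succ_iff, Finset.mem_range_succ_iff,
      Nat.le_div_iff_mul_le (Nat.pos_of_ne_zero hp), mul_comm]
  rw [coeff_mul, Finset.Nat.sum_antidiagonal_eq_sum_range_succ
    (fun i j => coeff i (expand p hp f) * coeff j g)]
  symm
  refine Finset.sum_of_injOn (p * ·) (fun _ _ _ _ h => Nat.eq_of_mul_eq_mul_left
    (Nat.pos_of_ne_zero hp) h) (fun k hk => (mem_iff k).2 hk) (fun i hi hni => ?_)
    (fun k _ => by rw [coeff_expand_mul])
  rw [coeff_expand_of_not_dvd, zero_mul]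
  rintro ⟨k, rfl⟩
  exact hni ⟨k, (mem_iff k).1 hi, rfl⟩

end PowerSeriesExpand

lemma triangle_add (m n : ℕ) :
    (m + n) * (m + n - 1) / 2 = m * (m - 1) / 2 + n * (n - 1) / 2 + m * n := by
  induction n with
  | zero => simp
  | succ n ih =>
    rw [← add_assoc, Nat.triangle_succ, Nat.triangle_succ, ih]
    ring

lemma one_sub_self_mul_pow_ne_zero {q : ℂ} (hq : ¬IsOfFinOrder q) (n : ℕ) :
    1 - q * q ^ n ≠ 0 := by
  rw [← pow_succ', sub_ne_zero]
  exact fun h => hq (isOfFinOrder_iff_pow_eq_one.2 ⟨n + 1, n.succ_pos, h.symm⟩)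

section QPochhammer

@[simp]
lemma qPoch_zero (a q : ℂ) : qPoch a q 0 = 1 := by
  simp [qPoch]

lemma qPoch_succ (a q : ℂ) (n : ℕ) : qPoch a q (n + 1) = qPoch a q n * (1 - a * q ^ n) :=
  Finset.prod_range_succ _ n

lemma qPoch_ne_zero {a q : ℂ} (h : ∀ n : ℕ, 1 - a * q ^ n ≠ 0) (n : ℕ) : qPoch a q n ≠ 0 :=
  Finset.prod_ne_zero_iff.2 fun k _ => h k

lemma qPoch_inv_inv {a q : ℂ} (ha : a ≠ 0) (hq : q ≠ 0) (n : ℕ) :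
    qPoch a⁻¹ q⁻¹ n = (-1) ^ n * qPoch a q n / (a ^ n * q ^ (n * (n - 1) / 2)) := by
  induction n with
  | zero => simp
  | succ n ih =>
    rw [qPoch_succ, qPoch_succ, ih, Nat.triangle_succ, inv_pow]
    field_simp
    ring

lemma qBinom_add_left_eq_pow_mul_qBinom_inv {q : ℂ} (hq : q ≠ 0) (k m : ℕ) :
    qBinom q (k + m) k = q ^ (k * m) * qBinom q⁻¹ (k + m) k := by
  simp only [qBinom, Nat.add_sub_cancel_left, qPoch_inv_inv hq hq, triangle_add, pow_add]
  field_simp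

lemma B2poly_pow_triangle_mul {q : ℂ} (hq : q ≠ 0) (b : ℕ → ℂ) (n : ℕ) (x : ℂ) :
    B2poly q (fun m => q ^ (m * (m - 1) / 2) * b m) n x =
      q ^ (n * (n - 1) / 2) * B1poly q⁻¹ b n x := by
  rw [B2poly, B1poly, Finset.mul_sum]
  refine Finset.sum_congr rfl fun k hk => ?_
  obtain ⟨m, rfl⟩ := Nat.exists_eq_add_of_le (Finset.mem_range_succ_iff.1 hk)
  rw [Nat.add_sub_cancel_left, qBinom_add_left_eq_pow_mul_qBinom_inv hq, triangle_add]
  ring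

end QPochhammer

section QExponential

/-- The Eulerian generating function `∑ b_n x^n / (q;q)_n`, without the usual normalization of `x`
by `1 - q`. -/
noncomputable def eulerianGenFun (q : ℂ) (b : ℕ → ℂ) : ℂ⟦X⟧ :=
  PowerSeries.mk fun n => b n / qPoch q q n

/-- Jackson's small q-exponential at `-x`, the expansion of `1 / (-x;q)_∞`. -/
noncomputable def smallQExpNeg (q : ℂ) : ℂ⟦X⟧ :=
  eulerianGenFun q fun n => (-1) ^ n

/-- Jackson's big q-exponential at `-x`, the expansion of `(x;q)_∞`. -/
noncomputable def bigQExpNeg (q : ℂ) : ℂ⟦X⟧ :=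
  eulerianGenFun q fun n => q ^ (n * (n - 1) / 2) * (-1) ^ n

variable {q : ℂ}

lemma rescale_neg_eulerianGenFun (hq : q ≠ 0) (b : ℕ → ℂ) :
    rescale (-q) (eulerianGenFun q fun n => q ^ (n * (n - 1) / 2) * b n) =
      eulerianGenFun q⁻¹ b := by
  ext n
  simp only [eulerianGenFun, coeff_rescale, coeff_mk, qPoch_inv_inv hq hq, neg_pow q]
  rcases neg_one_pow_eq_or ℂ n with sign | sign <;> rw [sign] <;> field_simp

lemma rescale_neg_bigQExpNeg (hq : q ≠ 0) : rescale (-q) (bigQExpNeg q) = smallQExpNeg q⁻¹ :=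
  rescale_neg_eulerianGenFun hq _

lemma eulerianGenFun_injective (hq : ¬IsOfFinOrder q) :
    Function.Injective (eulerianGenFun q) := fun b b' h => funext fun n => by
  have coeff_eq : b n / qPoch q q n = b' n / qPoch q q n := by
    simpa only [eulerianGenFun, coeff_mk] using congrArg (coeff n) h
  exact (div_left_inj' (qPoch_ne_zero (one_sub_self_mul_pow_ne_zero hq) n)).1 coeff_eq

lemma eulerianGenFun_sub_rescale (hq : ¬IsOfFinOrder q) (b : ℕ → ℂ) :
    eulerianGenFun q b - rescale q (eulerianGenFun q b) =
      X * eulerianGenFun q fun n => b (n + 1) := by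
  ext n
  cases n with
  | zero => simp only [map_sub, coeff_zero_X_mul, coeff_rescale, pow_zero, one_mul, sub_self]
  | succ n =>
    have factor_ne := one_sub_self_mul_pow_ne_zero hq n
    simp only [map_sub, coeff_succ_X_mul, coeff_rescale, eulerianGenFun, coeff_mk, qPoch_succ]
    field_simp
    ring

lemma rescale_smallQExpNeg (hq : ¬IsOfFinOrder q) :
    rescale q (smallQExpNeg q) = (1 + X) * smallQExpNeg q := by
  have shift : (eulerianGenFun q fun n => (-1) ^ (n + 1)) = -smallQExpNeg q := by
    ext n
    simp only [smallQExpNeg, eulerianGenFun, map_neg, coeff_mk]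
    ring
  have difference := eulerianGenFun_sub_rescale hq fun n => (-1) ^ n
  rw [shift, ← smallQExpNeg] at difference
  linear_combination -difference

lemma bigQExpNeg_eq_mul_rescale (hq : ¬IsOfFinOrder q) :
    bigQExpNeg q = (1 - X) * rescale q (bigQExpNeg q) := by
  have shift : (eulerianGenFun q fun n => q ^ ((n + 1) * (n + 1 - 1) / 2) * (-1) ^ (n + 1)) =
      -rescale q (bigQExpNeg q) := by
    ext n
    simp only [bigQExpNeg, eulerianGenFun, map_neg, coeff_rescale, coeff_mk, Nat.triangle_succ]
    ring
  have difference := eulerianGenFun_sub_rescale hq fun n => q ^ (n * (n - 1) / 2) * (-1) ^ n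
  rw [shift, ← bigQExpNeg] at difference
  linear_combination difference

lemma eq_of_eq_one_sub_X_mul_rescale (hq : ¬IsOfFinOrder q) {f g : ℂ⟦X⟧}
    (hf : f = (1 - X) * rescale q f) (hg : g = (1 - X) * rescale q g)
    (h0 : coeff 0 f = coeff 0 g) : f = g := by
  have recursion {f : ℂ⟦X⟧} (hf : f = (1 - X) * rescale q f) (n : ℕ) :
      (1 - q * q ^ n) * coeff (n + 1) f = -(q ^ n * coeff n f) := by
    have coeff_succ := congrArg (coeff (n + 1)) hf
    rw [sub_mul, one_mul, map_sub, coeff_succ_X_mul, coeff_rescale, coeff_rescale] at coeff_succ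
    linear_combination coeff_succ
  ext n
  induction n with
  | zero => exact h0
  | succ n ih =>
    apply mul_left_cancel₀ (one_sub_self_mul_pow_ne_zero hq n)
    rw [recursion hf, recursion hg, ih]

/-- `(x²;q²)_∞ = (x;q)_∞ (-x;q)_∞`. -/
lemma expand_two_bigQExpNeg_mul_smallQExpNeg (hq : ¬IsOfFinOrder q) :
    expand 2 two_ne_zero (bigQExpNeg (q ^ 2)) * smallQExpNeg q = bigQExpNeg q := by
  have hq2 : ¬IsOfFinOrder (q ^ 2) := fun h => hq (h.of_pow two_ne_zero)
  refine eq_of_eq_one_sub_X_mul_rescale hq ?_ (bigQExpNeg_eq_mul_rescale hq) ?_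
  · have expanded := congrArg (expand 2 two_ne_zero) (bigQExpNeg_eq_mul_rescale hq2)
    rw [map_mul, map_sub, map_one, expand_X, ← rescale_expand] at expanded
    rw [map_mul, rescale_smallQExpNeg hq]
    linear_combination smallQExpNeg q * expanded
  · simp [bigQExpNeg, smallQExpNeg, eulerianGenFun]

end QExponential

section QBessel

/-- The power series of Jackson's first q-Bessel function: base `Q`, parameter `c = Q^(ν+1)`,
stripped of its prefactor and with the variable chosen so that no signs occur. -/
noncomputable def qBesselOne (Q c : ℂ) : ℂ⟦X⟧ :=
  PowerSeries.mk fun n => 1 / (qPoch Q Q n * qPoch c Q n)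

/-- The power series of Jackson's second q-Bessel function, normalized as `qBesselOne`. -/
noncomputable def qBesselTwo (Q c : ℂ) : ℂ⟦X⟧ :=
  PowerSeries.mk fun n => (Q ^ (n * (n - 1) / 2)) ^ 2 * c ^ n / (qPoch Q Q n * qPoch c Q n)

/-- The q-difference operator `(1 - θ)(Q - cθ)`, where `θ f(x) = f(Qx)`. -/
noncomputable def qBesselOperator (Q c : ℂ) (f : ℂ⟦X⟧) : ℂ⟦X⟧ :=
  C Q * f - C (Q + c) * rescale Q f + C c * rescale (Q ^ 2) f

variable {Q c : ℂ}

lemma rescale_qBesselTwo (hQ : Q ≠ 0) (hc : c ≠ 0) :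
    rescale Q (qBesselTwo Q c) = qBesselOne Q⁻¹ c⁻¹ := by
  ext n
  simp only [qBesselOne, qBesselTwo, coeff_rescale, coeff_mk, qPoch_inv_inv hQ hQ,
    qPoch_inv_inv hc hQ]
  rcases neg_one_pow_eq_or ℂ n with sign | sign <;> rw [sign] <;> field_simp

lemma coeff_qBesselOperator (f : ℂ⟦X⟧) (n : ℕ) :
    coeff n (qBesselOperator Q c f) = (1 - Q ^ n) * (Q - c * Q ^ n) * coeff n f := by
  simp only [qBesselOperator, map_add, map_sub, coeff_C_mul, coeff_rescale, add_mul]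
  ring

lemma qBesselOperator_qBesselOne (hQ : ¬IsOfFinOrder Q) (hc : ∀ n : ℕ, 1 - c * Q ^ n ≠ 0) :
    qBesselOperator Q c (qBesselOne Q c) = C Q * (X * qBesselOne Q c) := by
  ext n
  rw [coeff_qBesselOperator, coeff_C_mul]
  cases n with
  | zero => simp
  | succ n =>
    have factor_ne := one_sub_self_mul_pow_ne_zero hQ n
    have c_factor_ne : 1 - Q ^ n * c ≠ 0 := mul_comm c (Q ^ n) ▸ hc n
    simp only [coeff_succ_X_mul, qBesselOne, coeff_mk, qPoch_succ, pow_succ']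
    field_simp

lemma qBesselOperator_qBesselTwo (hQ : ¬IsOfFinOrder Q) (hc : ∀ n : ℕ, 1 - c * Q ^ n ≠ 0) :
    qBesselOperator Q c (qBesselTwo Q c) =
      C (c * Q) * (X * rescale (Q ^ 2) (qBesselTwo Q c)) := by
  ext n
  rw [coeff_qBesselOperator, coeff_C_mul]
  cases n with
  | zero => simp
  | succ n =>
    have factor_ne := one_sub_self_mul_pow_ne_zero hQ n
    have c_factor_ne : 1 - Q ^ n * c ≠ 0 := mul_comm c (Q ^ n) ▸ hc n
    simp only [coeff_succ_X_mul, coeff_rescale, qBesselTwo, coeff_mk, qPoch_succ,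
      Nat.triangle_succ, pow_succ' Q n]
    field_simp
    ring

lemma eq_of_qBesselOperator_eq (hQ0 : Q ≠ 0) (hQ : ¬IsOfFinOrder Q)
    (hc : ∀ n : ℕ, 1 - c * Q ^ n ≠ 0) {f g : ℂ⟦X⟧}
    (hf : qBesselOperator Q c f = C (c * Q) * (X * rescale (Q ^ 2) f))
    (hg : qBesselOperator Q c g = C (c * Q) * (X * rescale (Q ^ 2) g))
    (h0 : coeff 0 f = coeff 0 g) : f = g := by
  have recursion {f : ℂ⟦X⟧} (hf : qBesselOperator Q c f = C (c * Q) * (X * rescale (Q ^ 2) f))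
      (n : ℕ) : Q * ((1 - Q * Q ^ n) * (1 - c * Q ^ n)) * coeff (n + 1) f =
        c * Q * ((Q ^ 2) ^ n * coeff n f) := by
    have coeff_succ := congrArg (coeff (n + 1)) hf
    rw [coeff_qBesselOperator, coeff_C_mul, coeff_succ_X_mul, coeff_rescale] at coeff_succ
    linear_combination coeff_succ
  ext n
  induction n with
  | zero => exact h0
  | succ n ih =>
    apply mul_left_cancel₀
      (mul_ne_zero hQ0 (mul_ne_zero (one_sub_self_mul_pow_ne_zero hQ n) (hc n)))
    rw [recursion hf, recursion hg, ih]

lemma bigQExpNeg_mul_qBesselOne (hQ0 : Q ≠ 0) (hQ : ¬IsOfFinOrder Q)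
    (hc : ∀ n : ℕ, 1 - c * Q ^ n ≠ 0) : bigQExpNeg Q * qBesselOne Q c = qBesselTwo Q c := by
  refine eq_of_qBesselOperator_eq hQ0 hQ hc ?_ (qBesselOperator_qBesselTwo hQ hc) ?_
  · have exp_eq := bigQExpNeg_eq_mul_rescale hQ
    have rescale_exp_eq :
        rescale Q (bigQExpNeg Q) = (1 - C Q * X) * rescale (Q ^ 2) (bigQExpNeg Q) := by
      simpa only [map_mul, map_sub, map_one, rescale_X, rescale_rescale, ← sq] using
        congrArg (rescale Q) exp_eq
    have bessel_eq := qBesselOperator_qBesselOne hQ hc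
    simp only [qBesselOperator, map_mul] at bessel_eq ⊢
    linear_combination rescale Q (bigQExpNeg Q) * bessel_eq + C Q * qBesselOne Q c * exp_eq -
      C c * rescale (Q ^ 2) (qBesselOne Q c) * rescale_exp_eq
  · simp [bigQExpNeg, eulerianGenFun, qBesselOne, qBesselTwo]

end QBessel

/-- `β` is the sequence of generalized q-Bernoulli numbers with base `q` and parameter
`c = q^(2α+2)`. The recursion of `qBetaSpec` is encoded as an identity between generating functions,
which makes sense for complex `q` and `c`. -/
def IsQBernoulli (q c : ℂ) (β : ℕ → ℂ) : Prop :=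
  expand 2 two_ne_zero (qBesselOne (q ^ 2) c) * eulerianGenFun q (fun n => 2 ^ n * β n) =
    smallQExpNeg q

lemma qBetaSpec.isQBernoulli {q α : ℝ} {β : ℕ → ℂ} (hβ : qBetaSpec q α β) (hq : q ≠ 1) :
    IsQBernoulli q ((q ^ (2 * α + 2) : ℝ) : ℂ) β := by
  have one_sub_ne : (1 : ℂ) - q ≠ 0 := sub_ne_zero.2 (by exact_mod_cast hq.symm)
  ext n
  rw [coeff_expand_mul_eq_sum]
  rcases Nat.eq_zero_or_pos n with rfl | hn
  · simp [qBesselOne, eulerianGenFun, smallQExpNeg, hβ.1]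
  have scaled_rhs : coeff n (smallQExpNeg q) =
      (2 / (1 - q)) ^ n * ((-1 / 2) ^ n / qFact q n) := by
    simp only [smallQExpNeg, eulerianGenFun, coeff_mk, qFact, div_pow]
    field_simp
  rw [scaled_rhs, ← hβ.2 n hn, Finset.mul_sum]
  refine Finset.sum_congr rfl fun k hk => ?_
  have hkn : 2 * k ≤ n := by
    rw [Finset.mem_range] at hk
    omega
  obtain ⟨m, rfl⟩ := Nat.exists_eq_add_of_le hkn
  simp only [qBesselOne, eulerianGenFun, coeff_mk, qFact, Nat.add_sub_cancel_left, div_pow,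
    pow_add]
  field_simp

namespace IsQBernoulli

variable {q c : ℂ} {β β' : ℕ → ℂ}

lemma qBesselTwo_mul (hβ : IsQBernoulli q c β) (hq0 : q ≠ 0) (hq : ¬IsOfFinOrder q)
    (hc : ∀ n : ℕ, 1 - c * (q ^ 2) ^ n ≠ 0) :
    expand 2 two_ne_zero (qBesselTwo (q ^ 2) c) * eulerianGenFun q (fun n => 2 ^ n * β n) =
      bigQExpNeg q := by
  have hq2 : ¬IsOfFinOrder (q ^ 2) := fun h => hq (h.of_pow two_ne_zero)
  rw [← bigQExpNeg_mul_qBesselOne (pow_ne_zero 2 hq0) hq2 hc, map_mul, mul_assoc, hβ,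
    expand_two_bigQExpNeg_mul_smallQExpNeg hq]

lemma qBesselTwo_mul_of_inv (hβ : IsQBernoulli q⁻¹ c⁻¹ β) (hq0 : q ≠ 0) (hc0 : c ≠ 0) :
    expand 2 two_ne_zero (qBesselTwo (q ^ 2) c) *
      eulerianGenFun q (fun n => q ^ (n * (n - 1) / 2) * (2 ^ n * β n)) = bigQExpNeg q := by
  apply rescale_injective (neg_ne_zero.2 hq0)
  rw [map_mul, rescale_expand, neg_sq, rescale_qBesselTwo (pow_ne_zero 2 hq0) hc0, ← inv_pow,
    rescale_neg_eulerianGenFun hq0, rescale_neg_bigQExpNeg hq0, hβ]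

theorem eq_pow_triangle_mul (hβ : IsQBernoulli q c β) (hβ' : IsQBernoulli q⁻¹ c⁻¹ β')
    (hq0 : q ≠ 0) (hq : ¬IsOfFinOrder q) (hc0 : c ≠ 0)
    (hc : ∀ n : ℕ, 1 - c * (q ^ 2) ^ n ≠ 0) (n : ℕ) :
    β n = q ^ (n * (n - 1) / 2) * β' n := by
  have bessel_ne : expand 2 two_ne_zero (qBesselTwo (q ^ 2) c) ≠ 0 := fun h => by
    simpa [qBesselTwo] using congrArg (coeff 0) h
  have genFun_eq := mul_left_cancel₀ bessel_ne
    ((hβ.qBesselTwo_mul hq0 hq hc).trans (hβ'.qBesselTwo_mul_of_inv hq0 hc0).symm)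
  have weighted_eq := congrFun (eulerianGenFun_injective hq genFun_eq) n
  apply mul_left_cancel₀ (pow_ne_zero n (two_ne_zero (α := ℂ)))
  linear_combination weighted_eq

end IsQBernoulli

lemma not_isOfFinOrder_ofReal {q : ℝ} (hq : 0 < q) (hq1 : q ≠ 1) : ¬IsOfFinOrder (q : ℂ) := by
  rw [isOfFinOrder_iff_pow_eq_one]
  rintro ⟨n, hn, h⟩
  exact hq1 ((pow_eq_one_iff_of_nonneg hq.le hn.ne').1 (by exact_mod_cast h))

lemma one_sub_rpow_mul_pow_ne_zero {q α : ℝ} (hq : 0 < q) (hq1 : q ≠ 1)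
    (hα : ∀ k : ℕ, α ≠ -(k + 1)) (n : ℕ) :
    1 - ((q ^ (2 * α + 2) : ℝ) : ℂ) * ((q : ℂ) ^ 2) ^ n ≠ 0 := by
  have exponent_ne : 2 * α + 2 + (2 * n : ℕ) ≠ 0 := fun h => hα n (by push_cast at h; linarith)
  have real_ne : q ^ (2 * α + 2) * (q ^ 2) ^ n ≠ 1 := by
    rw [← pow_mul, ← Real.rpow_natCast, ← Real.rpow_add hq]
    exact fun h => exponent_ne ((Real.rpow_right_inj hq hq1).1 (h.trans (Real.rpow_zero q).symm))
  rw [sub_ne_zero]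
  exact_mod_cast real_ne.symm

theorem stmt13_general (q α : ℝ) (hq : 0 < q) (hq1 : q ≠ 1) (hα : ∀ k : ℕ, α ≠ -(k + 1))
    (β β' : ℕ → ℂ) (hβ : qBetaSpec q α β) (hβ' : qBetaSpec (1 / q) α β') :
    (∀ (n : ℕ) (x : ℂ),
        B2poly (q : ℂ) β n x = (q : ℂ) ^ (n * (n - 1) / 2) * B1poly ((q : ℂ))⁻¹ β' n x) ∧
      ∀ n : ℕ, β n = (q : ℂ) ^ (n * (n - 1) / 2) * β' n := by
  have hq0 : (q : ℂ) ≠ 0 := by exact_mod_cast hq.ne'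
  have hc0 : ((q ^ (2 * α + 2) : ℝ) : ℂ) ≠ 0 := by exact_mod_cast (Real.rpow_pos_of_pos hq _).ne'
  have hβ'_inv : IsQBernoulli (q : ℂ)⁻¹ ((q ^ (2 * α + 2) : ℝ) : ℂ)⁻¹ β' := by
    simpa only [one_div, Real.inv_rpow hq.le, Complex.ofReal_inv] using
      hβ'.isQBernoulli (by simpa using hq1)
  have numbers_eq : ∀ n : ℕ, β n = (q : ℂ) ^ (n * (n - 1) / 2) * β' n :=
    (hβ.isQBernoulli hq1).eq_pow_triangle_mul hβ'_inv hq0 (not_isOfFinOrder_ofReal hq hq1) hc0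
      (one_sub_rpow_mul_pow_ne_zero hq hq1 hα)
  refine ⟨fun n x => ?_, numbers_eq⟩
  rw [funext numbers_eq, B2poly_pow_triangle_mul hq0]

/-- `B^{(2)}_{n,α}(x;q) = q^{n(n-1)/2} B^{(1)}_{n,α}(x;1/q)`; in particular
`β_{n,α}(q) = q^{n(n-1)/2} β_{n,α}(1/q)`. -/
theorem stmt13 (q α : ℝ) (hq : 0 < q) (hq1 : q < 1) (hα : -1 < α)
    (β β' : ℕ → ℂ) (hβ : qBetaSpec q α β) (hβ' : qBetaSpec (1 / q) α β') :
    (∀ (n : ℕ) (x : ℂ),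
        B2poly (q : ℂ) β n x = (q : ℂ) ^ (n * (n - 1) / 2) * B1poly ((q : ℂ))⁻¹ β' n x) ∧
      ∀ n : ℕ, β n = (q : ℂ) ^ (n * (n - 1) / 2) * β' n := by
  exact stmt13_general q α hq hq1.ne
    (fun k h => by linarith [k.cast_nonneg (α := ℝ)]) β β' hβ hβ'
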